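/- arXiv:0805.3259 — 2 statements merged into one kernel-verified Lean document; each statement's English description precedes it below -/
import Mathlib

section
/- Let A = (λ_1, …, λ_n) be a non pyramidal regular configuration in ℤ^d of rank d, and let B be a Gale dual of A with rows b_1, …, b_n. Then the following are equivalent: (i) for every v ∈ ker_ℚ(A), the indicator vector of the set {i : v_i = 0} lies in the row span of A over ℚ; (ii) for every 1-dimensional linear subspace L of ℚ^{n−d}, Σ_{i : b_i ∈ L} b_i = 0. (Condition (i) is, by the tropical characterization of Dickenstein–Feichtner–Sturmfels, equivalent to dim X_A = dim X_A*, so this equivalence is the combinatorial content of Theorem teo:Bside characterizing self-dual toric varieties.) -/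
open scoped Classical

/-!
The rows `b i` of a Gale dual `B` detect the row span of `A`: a vector `w` is a combination of the
rows of `A` iff `∑ i, w i • b i = 0`. A relation among the columns of `A` has the form
`v i = f (b i)` for a linear functional `f`, so the indicator vectors of zero sets of relations lie
in the row span iff `∑_{b i ∈ H} b i = 0` for each `H = ker f`. If all line sums vanish, so do
these, because the nonzero `b i` in `H` are partitioned by the lines they span. Conversely, since
the ground field is infinite, every line `L` lies in some `ker f` that contains no `b i` outside
`L`. That the columns of `B` generate all rational relations, not just the integral ones, is the
flatness of `ℚ` over `ℤ`.
-/

open Matrix Module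

section Lines

variable {K V ι : Type*} [DivisionRing K] [AddCommGroup V] [Module K V]

lemma span_singleton_eq_iff_mem_of_finrank_eq_one {L : Submodule K V} (hL : finrank K L = 1)
    {x : V} (hx : x ≠ 0) : Submodule.span K {x} = L ↔ x ∈ L := by
  have hspan : Submodule.span K {x} ≠ ⊥ := by rwa [Ne, Submodule.span_singleton_eq_bot]
  rw [← (Submodule.isAtom_iff_finrank_eq_one.2 hL).le_iff_eq hspan,
    Submodule.span_singleton_le_iff_mem]

lemma sum_mem_submodule_eq_zero_of_forall_line [Fintype ι] {b : ι → V}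
    (hline : ∀ L : Submodule K V, finrank K L = 1 → ∑ i with b i ∈ L, b i = 0)
    (W : Submodule K V) : ∑ i with b i ∈ W, b i = 0 := by
  let line (i : ι) : Submodule K V := Submodule.span K {b i}
  let nonzeroIn (U : Submodule K V) : Finset ι := {i | b i ∈ U ∧ b i ≠ 0}
  have sum_nonzeroIn (U : Submodule K V) : ∑ i ∈ nonzeroIn U, b i = ∑ i with b i ∈ U, b i := by
    rw [← Finset.sum_filter_ne_zero {i | b i ∈ U}, Finset.filter_filter]
  rw [← sum_nonzeroIn, ← Finset.sum_fiberwise_of_maps_to (g := line)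
    fun i hi => Finset.mem_image_of_mem line hi]
  refine Finset.sum_eq_zero fun L hL => ?_
  obtain ⟨j, hj, rfl⟩ := Finset.mem_image.1 hL
  obtain ⟨hjW, hj0⟩ : b j ∈ W ∧ b j ≠ 0 := by simpa [nonzeroIn] using hj
  have hrank : finrank K (line j) = 1 := finrank_span_singleton hj0
  have hle : line j ≤ W := (Submodule.span_singleton_le_iff_mem _ _).2 hjW
  have hfiber : {i ∈ nonzeroIn W | line i = line j} = nonzeroIn (line j) := by
    ext i
    simp only [nonzeroIn, Finset.mem_filter, Finset.mem_univ, true_and]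
    constructor
    · rintro ⟨⟨-, hi0⟩, hij⟩
      exact ⟨(span_singleton_eq_iff_mem_of_finrank_eq_one hrank hi0).1 hij, hi0⟩
    · rintro ⟨hij, hi0⟩
      exact ⟨⟨hle hij, hi0⟩, (span_singleton_eq_iff_mem_of_finrank_eq_one hrank hi0).2 hij⟩
  rw [hfiber, sum_nonzeroIn, hline _ hrank]

end Lines

section Functionals

variable {K V ι : Type*} [Field K] [Infinite K] [AddCommGroup V] [Module K V]

lemma exists_dual_forall_apply_eq_zero_iff_mem [Finite ι] (b : ι → V) (W : Submodule K V) :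
    ∃ f : Dual K V, ∀ i, f (b i) = 0 ↔ b i ∈ W := by
  have hsep (i : {i // b i ∉ W}) : ∃ f ∈ W.dualAnnihilator, Dual.eval K V (b i) f ≠ 0 := by
    by_contra! h
    exact i.2 ((Subspace.forall_mem_dualAnnihilator_apply_eq_zero_iff W (b i)).1 h)
  obtain ⟨f, hfW, hf⟩ := Dual.exists_forall_mem_ne_zero_of_forall_exists W.dualAnnihilator _ hsep
  exact ⟨f, fun i => ⟨fun h => by_contra fun hi => hf ⟨i, hi⟩ h,
    (Submodule.mem_dualAnnihilator f).1 hfW (b i)⟩⟩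

lemma forall_dual_sum_apply_eq_zero_iff_forall_line [Fintype ι] (b : ι → V) :
    (∀ f : Dual K V, ∑ i with f (b i) = 0, b i = 0) ↔
      ∀ L : Submodule K V, finrank K L = 1 → ∑ i with b i ∈ L, b i = 0 := by
  constructor
  · intro hdual L _
    obtain ⟨f, hf⟩ := exists_dual_forall_apply_eq_zero_iff_mem b L
    simpa only [hf] using hdual f
  · intro hline f
    simpa only [LinearMap.mem_ker] using
      sum_mem_submodule_eq_zero_of_forall_line hline (LinearMap.ker f)

end Functionals

section RowSpan

lemma indicator_one_vecMul {R ι κ : Type*} [NonAssocSemiring R] [Fintype ι] (Z : Set ι)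
    (B : Matrix ι κ R) : Z.indicator 1 ᵥ* B = ∑ i with i ∈ Z, B.row i := by
  ext j
  simp [vecMul, dotProduct, Set.indicator_apply, Finset.sum_filter]

variable {K m ι κ : Type*} [Field K] [Fintype ι]

lemma mem_span_range_row_iff_forall_mulVec_eq_zero {A : Matrix m ι K} {w : ι → K} :
    w ∈ Submodule.span K (Set.range A.row) ↔ ∀ v, A *ᵥ v = 0 → w ⬝ᵥ v = 0 := by
  constructor
  · intro hw v hv
    induction hw using Submodule.span_induction with
    | mem x hx => obtain ⟨r, rfl⟩ := hx; exact congrFun hv r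
    | zero => exact zero_dotProduct v
    | add x y _ _ hx hy => rw [add_dotProduct, hx, hy, add_zero]
    | smul a x _ hx => rw [smul_dotProduct, hx, smul_zero]
  · intro h
    have hmem : dotProductEquiv K ι w ∈
        Submodule.span K (Set.range fun r => dotProductEquiv K ι (A.row r)) := by
      refine FiniteDimensional.mem_span_of_iInf_ker_le_ker fun v hv => h v ?_
      exact funext fun r => (Submodule.mem_iInf _).1 hv r
    rw [Set.range_comp' (dotProductEquiv K ι), Submodule.span_image_linearEquiv] at hmem
    simpa using hmem

lemma mem_span_range_row_iff_vecMul_eq_zero [Fintype κ] {A : Matrix m ι K} {B : Matrix ι κ K}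
    (hAB : Function.Exact B.mulVec A.mulVec) {w : ι → K} :
    w ∈ Submodule.span K (Set.range A.row) ↔ w ᵥ* B = 0 := by
  simp only [mem_span_range_row_iff_forall_mulVec_eq_zero, hAB _, Set.forall_mem_range,
    dotProduct_mulVec]
  exact dotProduct_eq_zero_iff

theorem forall_indicator_zeroSet_mem_span_row_iff_forall_line [Infinite K] [Fintype κ]
    {A : Matrix m ι K} {B : Matrix ι κ K} (hAB : Function.Exact B.mulVec A.mulVec) :
    (∀ v, A *ᵥ v = 0 → {i | v i = 0}.indicator 1 ∈ Submodule.span K (Set.range A.row)) ↔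
      ∀ L : Submodule K (κ → K), finrank K L = 1 → ∑ i with B.row i ∈ L, B.row i = 0 := by
  have hmulVec (c : κ → K) (i : ι) : (B *ᵥ c) i = dotProductEquiv K κ c (B.row i) :=
    dotProduct_comm _ _
  rw [← forall_dual_sum_apply_eq_zero_iff_forall_line, (dotProductEquiv K κ).surjective.forall]
  simp only [hAB _, Set.forall_mem_range, mem_span_range_row_iff_vecMul_eq_zero hAB,
    indicator_one_vecMul, Set.mem_ofPred_eq, hmulVec]

end RowSpan

section BaseChange

variable {R S m ι κ : Type*} [CommRing R] [CommRing S] [Algebra R S] [Fintype ι] [Fintype κ]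

lemma mulVecLin_map_algebraMap_comp_piScalarRight (M : Matrix ι κ R) :
    ((M.map (algebraMap R S)).mulVecLin.restrictScalars R) ∘ₗ
        (TensorProduct.piScalarRight R R S κ).toLinearMap =
      (TensorProduct.piScalarRight R R S ι).toLinearMap ∘ₗ M.mulVecLin.lTensor S := by
  ext s j i
  simp [Algebra.smul_def, mulVec, dotProduct, Pi.single_apply]

lemma exact_mulVec_map_algebraMap [Flat R S] [Finite m] {A : Matrix m ι R}
    {B : Matrix ι κ R} (hAB : Function.Exact B.mulVec A.mulVec) :
    Function.Exact (B.map (algebraMap R S)).mulVec (A.map (algebraMap R S)).mulVec := by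
  have := Fintype.ofFinite m
  exact Function.Exact.of_ladder_linearEquiv_of_exact
    (mulVecLin_map_algebraMap_comp_piScalarRight (S := S) B)
    (mulVecLin_map_algebraMap_comp_piScalarRight A)
    (Flat.lTensor_exact S (f := B.mulVecLin) (g := A.mulVecLin) hAB)

end BaseChange

theorem stmt8_general {R K m ι κ : Type*} [CommRing R] [Field K] [Infinite K] [Algebra R K]
    [Flat R K] [Finite m] [Fintype ι] [Fintype κ] {A : Matrix m ι R} {B : Matrix ι κ R}
    (hAB : Function.Exact B.mulVec A.mulVec) :
    (∀ v : ι → K, A.map (algebraMap R K) *ᵥ v = 0 →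
        {i | v i = 0}.indicator 1 ∈ Submodule.span K (Set.range (A.map (algebraMap R K)).row)) ↔
      ∀ L : Submodule K (κ → K), finrank K L = 1 →
        ∑ i with (B.map (algebraMap R K)).row i ∈ L, (B.map (algebraMap R K)).row i = 0 :=
  forall_indicator_zeroSet_mem_span_row_iff_forall_line (exact_mulVec_map_algebraMap hAB)

/-- for a non pyramidal regular configuration with Gale dual `B`: the indicator
vector of the zero set of every rational relation lies in the row span of `A` iff the
line-sum criterion holds for the Gale rows. -/
theorem stmt8 (d n : ℕ) (hd : 0 < d) (A : Matrix (Fin d) (Fin n) ℤ)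
    (hreg : ∀ i : Fin n, A ⟨0, hd⟩ i = 1)
    (hrank : (A.map (Int.cast : ℤ → ℚ)).rank = d)
    (hnp : ¬ ∃ (i₀ : Fin n) (l : Fin d → ℚ),
        (∀ i : Fin n, i ≠ i₀ → ∑ r, l r * (A r i : ℚ) = 0) ∧
        ∑ r, l r * (A r i₀ : ℚ) = 1)
    (B : Matrix (Fin n) (Fin (n - d)) ℤ)
    (hBind : ∀ c : Fin (n - d) → ℤ, B.mulVec c = 0 → c = 0)
    (hBspan : ∀ v : Fin n → ℤ, A.mulVec v = 0 ↔ ∃ c : Fin (n - d) → ℤ, v = B.mulVec c) :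
    (∀ v : Fin n → ℚ, (A.map (Int.cast : ℤ → ℚ)).mulVec v = 0 →
        ∃ l : Fin d → ℚ, ∀ i : Fin n,
          (if v i = 0 then (1 : ℚ) else 0) = ∑ r, l r * (A r i : ℚ)) ↔
      ∀ L : Submodule ℚ (Fin (n - d) → ℚ), Module.finrank ℚ L = 1 →
        ∑ i ∈ Finset.univ.filter (fun i : Fin n => (fun t => (B i t : ℚ)) ∈ L),
          (fun t => (B i t : ℚ)) = (0 : Fin (n - d) → ℚ) := by
  have hAB : Function.Exact B.mulVec A.mulVec := fun v => by simpa [eq_comm] using hBspan v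
  refine Iff.trans (forall₂_congr fun v _ => ?_) (stmt8_general (K := ℚ) hAB)
  simp [Submodule.mem_span_range_iff_exists_fun, funext_iff, Set.indicator_apply, eq_comm]
end

section
/- Let A = (λ_1, …, λ_n) be a non pyramidal regular configuration in ℤ^d of rank d whose points λ_1, …, λ_n are pairwise distinct, with n ≥ d + 2 (i.e. the toric variety X_A has codimension greater than 1), and suppose every coparallelism class of A is a parallel face complement (the self-duality criterion). Then no point λ_i lies in the relative (intrinsic) interior of the convex hull Conv(A) ⊆ ℝ^d, and every proper (exposed) face F of Conv(A) contains at most one point λ_i in its relative interior. -/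
/-!
Suppose `λ i` lies in the relative interior of `F ⊆ Conv(A)` and `λ j ∈ F`. A linear functional
which is maximal at `λ i` among the points of `A` is constant on `F`. Applied to the functional
which is `1` on the coparallelism class of `i` and `0` off it, this shows that `j` is coparallel
to `i`. If `F = Conv(A)` then all indices are coparallel, so a vector of `ker A` vanishing at `i`
is zero and the codimension is at most one.

Suppose moreover that `λ j` is in the relative interior of `F` and `i ≠ j`. For `v, w ∈ ker A` the
vector `w i • v - v i • w` vanishes at `i`, hence at the coparallel index `j`. So the coordinates
`i` and `j` are linearly dependent on `ker A`, that is, some linear functional vanishes on every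
`λ k` with `k ≠ i, j` but not on both `λ i` and `λ j`. After scaling, its maximum over `A` is `1`
and is attained only inside `{λ i, λ j}`, so `F` is contained in the segment joining `λ i` and
`λ j`. An endpoint of a segment is in the relative interior of a subset containing both endpoints
only if the endpoints agree.
-/

open Matrix

section RelativeInterior

variable {E : Type*} [AddCommGroup E] [Module ℝ E] [TopologicalSpace E] [IsTopologicalAddGroup E]
  [ContinuousSMul ℝ E] {F : Set E} {x y : E}

lemma exists_mem_openSegment_of_mem_intrinsicInterior (hx : x ∈ intrinsicInterior ℝ F)
    (hy : y ∈ F) : ∃ z ∈ F, x ∈ openSegment ℝ y z := by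
  obtain ⟨x, hx_interior, rfl⟩ := mem_intrinsicInterior.1 hx
  let line : ℝ → affineSpan ℝ F := fun t =>
    ⟨AffineMap.lineMap (x : E) y t, AffineMap.lineMap_mem t x.2 (subset_affineSpan ℝ F hy)⟩
  have line_continuous : Continuous line :=
    AffineMap.lineMap_continuous.subtype_mk _
  have line_zero : line 0 = x := Subtype.ext (AffineMap.lineMap_apply_zero _ _)
  have eventually_mem : ∀ᶠ t in nhds (0 : ℝ), (line t : E) ∈ F :=
    line_continuous.continuousAt.eventually
      (line_zero ▸ mem_interior_iff_mem_nhds.1 hx_interior : (↑) ⁻¹' F ∈ nhds (line 0))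
  obtain ⟨t, ht, ht_neg⟩ :=
    ((eventually_mem.filter_mono nhdsWithin_le_nhds).and self_mem_nhdsWithin :
      ∀ᶠ t in nhdsWithin (0 : ℝ) (Set.Iio 0), (line t : E) ∈ F ∧ t ∈ Set.Iio 0).exists
  have one_sub_pos : 0 < 1 - t := by linarith [Set.mem_Iio.1 ht_neg]
  refine ⟨line t, ht, -t / (1 - t), 1 / (1 - t), div_pos (neg_pos.2 ht_neg) one_sub_pos,
    one_div_pos.2 one_sub_pos, by field_simp; ring, ?_⟩
  simp only [line, AffineMap.lineMap_apply_module]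
  match_scalars <;> field_simp
  ring

lemma apply_eq_of_mem_intrinsicInterior_of_forall_le (hx : x ∈ intrinsicInterior ℝ F) (hy : y ∈ F)
    (f : E →ₗ[ℝ] ℝ) (hmax : ∀ z ∈ F, f z ≤ f x) : f y = f x := by
  obtain ⟨z, hz, a, b, ha, hb, hab, hx_eq⟩ := exists_mem_openSegment_of_mem_intrinsicInterior hx hy
  have hfx : a * f y + b * f z = f x := by simp [← hx_eq]
  have hbz : b * f z ≤ b * f x := mul_le_mul_of_nonneg_left (hmax z hz) hb.le
  refine (hmax y hy).antisymm (le_of_mul_le_mul_left ?_ ha)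
  calc a * f x = f x - b * f x := by rw [eq_sub_of_add_eq hab]; ring
    _ ≤ a * f y := by linarith

lemma eq_of_mem_intrinsicInterior_of_subset_segment (hx : x ∈ intrinsicInterior ℝ F) (hy : y ∈ F)
    (hF : F ⊆ segment ℝ x y) : x = y := by
  obtain ⟨z, hz, hxyz⟩ := exists_mem_openSegment_of_mem_intrinsicInterior hx hy
  have hyxz : Wbtw ℝ y x z := mem_segment_iff_wbtw.1 (openSegment_subset_segment ℝ y z hxyz)
  have hyzx : Wbtw ℝ y z x := (mem_segment_iff_wbtw.1 (hF hz)).symm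
  obtain rfl : x = z := (wbtw_swap_right_iff ℝ y).1 ⟨hyxz, hyzx⟩
  exact (right_mem_openSegment_iff.1 hxyz).symm

end RelativeInterior

section ConvexHull

variable {𝕜 E : Type*} [Field 𝕜] [LinearOrder 𝕜] [IsStrictOrderedRing 𝕜] [AddCommGroup E]
  [Module 𝕜 E] {s : Set E} {f : E →ₗ[𝕜] 𝕜} {c : 𝕜} {z : E}

lemma apply_le_of_mem_convexHull (hs : ∀ p ∈ s, f p ≤ c) (hz : z ∈ convexHull 𝕜 s) : f z ≤ c :=
  convexHull_min hs (convex_halfSpace_le f.isLinear c) hz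

lemma mem_convexHull_sep_of_apply_eq (hs : ∀ p ∈ s, f p ≤ c) (hz : z ∈ convexHull 𝕜 s)
    (hfz : f z = c) : z ∈ convexHull 𝕜 {p ∈ s | f p = c} := by
  let T : Set E := {z | f z ≤ c ∧ (f z = c → z ∈ convexHull 𝕜 {p ∈ s | f p = c})}
  have convex_T : Convex 𝕜 T := by
    refine convex_iff_forall_pos.2 fun u ⟨hu, hu_mem⟩ w ⟨hw, hw_mem⟩ a b ha hb hab =>
      ⟨convex_halfSpace_le f.isLinear c hu hw ha.le hb.le hab, fun heq => ?_⟩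
    have hfu : a * f u ≤ a * c := mul_le_mul_of_nonneg_left hu ha.le
    have hfw : b * f w ≤ b * c := mul_le_mul_of_nonneg_left hw hb.le
    have hsum : a * f u + b * f w = a * c + b * c := by
      rw [← add_mul, hab, one_mul, ← heq]; simp
    exact convex_convexHull 𝕜 _ (hu_mem (mul_left_cancel₀ ha.ne' (by linarith)))
      (hw_mem (mul_left_cancel₀ hb.ne' (by linarith))) ha.le hb.le hab
  have subset_T : s ⊆ T := fun p hp => ⟨hs p hp, fun h => subset_convexHull 𝕜 _ ⟨hp, h⟩⟩
  exact (convexHull_min subset_T convex_T hz).2 hfz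

end ConvexHull

section PointFamily

variable {E ι : Type*} [AddCommGroup E] [Module ℝ E] [TopologicalSpace E] [IsTopologicalAddGroup E]
  [ContinuousSMul ℝ E] {F : Set E} {p : ι → E} {i j : ι}

lemma apply_eq_of_subset_convexHull_of_forall_le (hF : F ⊆ convexHull ℝ (Set.range p))
    (hi : p i ∈ intrinsicInterior ℝ F) (f : E →ₗ[ℝ] ℝ) (hmax : ∀ k, f (p k) ≤ f (p i)) {y : E}
    (hy : y ∈ F) : f y = f (p i) :=
  apply_eq_of_mem_intrinsicInterior_of_forall_le hi hy f fun _ hz =>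
    apply_le_of_mem_convexHull (Set.forall_mem_range.2 hmax) (hF hz)

lemma subset_convexHull_argmax (hF : F ⊆ convexHull ℝ (Set.range p))
    (hi : p i ∈ intrinsicInterior ℝ F) (f : E →ₗ[ℝ] ℝ) (hmax : ∀ k, f (p k) ≤ f (p i)) :
    F ⊆ convexHull ℝ {q ∈ Set.range p | f q = f (p i)} := fun _ hz =>
  mem_convexHull_sep_of_apply_eq (Set.forall_mem_range.2 hmax) (hF hz)
    (apply_eq_of_subset_convexHull_of_forall_le hF hi f hmax hz)

lemma eq_of_mem_intrinsicInterior_of_apply_eq_zero (hF : F ⊆ convexHull ℝ (Set.range p))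
    (hi : p i ∈ intrinsicInterior ℝ F) (hj : p j ∈ intrinsicInterior ℝ F) (f : E →ₗ[ℝ] ℝ)
    (hf : ∀ k, k ≠ i → k ≠ j → f (p k) = 0) (hne : f (p i) ≠ 0 ∨ f (p j) ≠ 0) : p i = p j := by
  wlog hle : |f (p j)| ≤ |f (p i)| generalizing i j
  · exact (this hj hi (fun k hkj hki => hf k hki hkj) hne.symm (le_of_not_ge hle)).symm
  have hfi : f (p i) ≠ 0 := by
    intro h
    rw [h, abs_zero, abs_nonpos_iff] at hle
    exact hne.elim (· h) (· hle)
  let g : E →ₗ[ℝ] ℝ := (f (p i))⁻¹ • f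
  have hgi : g (p i) = 1 := inv_mul_cancel₀ hfi
  have hgj : g (p j) ≤ 1 := by
    calc g (p j) = f (p j) / f (p i) := inv_mul_eq_div _ _
      _ ≤ |f (p j) / f (p i)| := le_abs_self _
      _ ≤ 1 := by rw [abs_div]; exact div_le_one_of_le₀ hle (abs_nonneg _)
  have hg : ∀ k, k ≠ i → k ≠ j → g (p k) = 0 := fun k hki hkj => by simp [g, hf k hki hkj]
  have hmax : ∀ k, g (p k) ≤ g (p i) := fun k => by
    by_cases hki : k = i
    · rw [hki]
    rw [hgi]
    by_cases hkj : k = j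
    · exact hkj ▸ hgj
    · exact (hg k hki hkj).trans_le zero_le_one
  have argmax_subset : {q ∈ Set.range p | g q = g (p i)} ⊆ {p i, p j} := by
    rintro _ ⟨⟨k, rfl⟩, hk⟩
    by_contra hk_notMem
    have hki : k ≠ i := fun h => hk_notMem (.inl (h ▸ rfl))
    have hkj : k ≠ j := fun h => hk_notMem (.inr (h ▸ rfl))
    exact zero_ne_one ((hg k hki hkj).symm.trans (hk.trans hgi))
  refine eq_of_mem_intrinsicInterior_of_subset_segment hi (intrinsicInterior_subset hj) ?_
  rw [← convexHull_pair]
  exact (subset_convexHull_argmax hF hi g hmax).trans (convexHull_mono argmax_subset)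

end PointFamily

section Configuration

variable {K m n : Type*} [Field K]

/-- Two columns of `B` are coparallel if no vector of the kernel of `B` vanishes at exactly one of
the two indices. -/
def Coparallel [Fintype n] (B : Matrix m n K) (i j : n) : Prop :=
  ∀ v : n → K, B *ᵥ v = 0 → (v i ≠ 0 ↔ v j ≠ 0)

lemma Coparallel.refl [Fintype n] (B : Matrix m n K) (i : n) : Coparallel B i i :=
  fun _ _ => Iff.rfl

lemma exists_not_coparallel [Fintype n] {B : Matrix m n K}
    (hcodim : B.rank + 2 ≤ Fintype.card n) (i : n) : ∃ j, ¬ Coparallel B i j := by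
  have two_le_finrank_ker : 2 ≤ Module.finrank K (LinearMap.ker B.mulVecLin) := by
    have rank_nullity := B.mulVecLin.finrank_range_add_finrank_ker
    rw [Module.finrank_fintype_fun_eq_card] at rank_nullity
    rw [Matrix.rank] at hcodim
    omega
  let evalAt : LinearMap.ker B.mulVecLin →ₗ[K] K :=
    LinearMap.proj i ∘ₗ (LinearMap.ker B.mulVecLin).subtype
  have ker_evalAt_ne_bot : LinearMap.ker evalAt ≠ ⊥ :=
    LinearMap.ker_ne_bot_of_finrank_lt (by rw [Module.finrank_self]; omega)
  obtain ⟨⟨v, hv⟩, hvi, hv_ne⟩ := Submodule.exists_mem_ne_zero_of_ne_bot ker_evalAt_ne_bot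
  obtain ⟨j, hvj⟩ : ∃ j, v j ≠ 0 := Function.ne_iff.1 fun h => hv_ne (Subtype.ext h)
  exact ⟨j, fun h => (h v hv).2 hvj hvi⟩

/-- A set of columns of `B` is a parallel face complement if some linear functional takes the value
`1` on it and `0` on all other columns. The functional is given by its coefficient vector `l`, so
that its values on the columns are the entries of `l ᵥ* B`. -/
def IsParallelFaceComplement [Fintype m] (B : Matrix m n K) (S : Set n) : Prop :=
  ∃ l : m → K, (∀ j ∈ S, (l ᵥ* B) j = 1) ∧ ∀ j ∉ S, (l ᵥ* B) j = 0

lemma exists_vecMul_eq_of_forall_dotProduct_eq_zero [Fintype m] [Fintype n] {B : Matrix m n K}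
    {c : n → K} (hc : ∀ v, B *ᵥ v = 0 → c ⬝ᵥ v = 0) : ∃ l : m → K, l ᵥ* B = c := by
  classical
  have hmem : dotProductEquiv K n c ∈ LinearMap.range B.mulVecLin.dualMap := by
    rw [LinearMap.range_dualMap_eq_dualAnnihilator_ker, Submodule.mem_dualAnnihilator]
    exact hc
  obtain ⟨ψ, hψ⟩ := hmem
  obtain ⟨l, rfl⟩ := (dotProductEquiv K m).surjective ψ
  refine ⟨l, dotProduct_eq _ _ fun v => ?_⟩
  rw [← dotProduct_mulVec]
  exact LinearMap.congr_fun hψ v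

lemma Coparallel.exists_vecMul_eq_zero [Fintype m] [Fintype n] {B : Matrix m n K} {i j : n}
    (h : Coparallel B i j) (hij : i ≠ j) :
    ∃ l : m → K, (∀ k, k ≠ i → k ≠ j → (l ᵥ* B) k = 0) ∧
      ((l ᵥ* B) i ≠ 0 ∨ (l ᵥ* B) j ≠ 0) := by
  classical
  by_cases hi : ∀ v, B *ᵥ v = 0 → v i = 0
  · obtain ⟨l, hl⟩ := exists_vecMul_eq_of_forall_dotProduct_eq_zero (B := B) (c := Pi.single i 1)
      (by simpa using hi)
    exact ⟨l, fun k hki _ => by simp [hl, hki], .inl (by simp [hl])⟩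
  · push Not at hi
    obtain ⟨v, hv, hvi⟩ := hi
    obtain ⟨l, hl⟩ := exists_vecMul_eq_of_forall_dotProduct_eq_zero (B := B)
      (c := Pi.single i (v j) - Pi.single j (v i)) fun w hw => by
        have hker : B *ᵥ (w i • v - v i • w) = 0 := by
          simp [mulVec_sub, mulVec_smul, hv, hw]
        have hzero : (w i • v - v i • w) j = 0 :=
          not_not.1 (mt (h _ hker).2 (by simp [mul_comm]))
        simpa [sub_dotProduct, mul_comm] using hzero
    exact ⟨l, fun k hki hkj => by simp [hl, hki, hkj], .inr (by simp [hl, hij.symm, hvi])⟩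

variable [Algebra K ℝ]

/-- The columns of `B`, viewed as points of a real vector space. -/
def realPoint (B : Matrix m n K) : n → m → ℝ :=
  (B.map (algebraMap K ℝ)).col

lemma realPoint_injective {B : Matrix m n K} (hB : Function.Injective B.col) :
    Function.Injective (realPoint B) := fun _ _ h =>
  hB (funext fun r => (algebraMap K ℝ).injective (congrFun h r))

/-- The real linear functional with coefficient vector `l`. -/
noncomputable def realFunctional [Fintype m] (l : m → K) : (m → ℝ) →ₗ[ℝ] ℝ :=
  dotProductBilin ℝ ℝ (algebraMap K ℝ ∘ l)

lemma realFunctional_realPoint [Fintype m] (l : m → K) (B : Matrix m n K) (k : n) :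
    realFunctional l (realPoint B k) = algebraMap K ℝ ((l ᵥ* B) k) :=
  ((algebraMap K ℝ).map_vecMul B l k).symm

lemma coparallel_of_mem_intrinsicInterior [Fintype m] [Fintype n] {B : Matrix m n K}
    {F : Set (m → ℝ)} {i j : n} (hF : F ⊆ convexHull ℝ (Set.range (realPoint B)))
    (hclass : IsParallelFaceComplement B {k | Coparallel B i k})
    (hi : realPoint B i ∈ intrinsicInterior ℝ F) (hj : realPoint B j ∈ F) : Coparallel B i j := by
  obtain ⟨l, hl_one, hl_zero⟩ := hclass
  have hfi : realFunctional l (realPoint B i) = 1 := by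
    simp [realFunctional_realPoint, hl_one i (Coparallel.refl B i)]
  have hmax : ∀ k, realFunctional l (realPoint B k) ≤ realFunctional l (realPoint B i) := by
    intro k
    rw [hfi, realFunctional_realPoint]
    by_cases hk : Coparallel B i k
    · simp [hl_one k hk]
    · simp [hl_zero k hk]
  have hfj : realFunctional l (realPoint B j) = 1 :=
    (apply_eq_of_subset_convexHull_of_forall_le hF hi _ hmax hj).trans hfi
  by_contra hj_notMem
  simp [realFunctional_realPoint, hl_zero j hj_notMem] at hfj

lemma Coparallel.realPoint_eq [Finite m] [Fintype n] {B : Matrix m n K} {F : Set (m → ℝ)}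
    {i j : n} (h : Coparallel B i j) (hF : F ⊆ convexHull ℝ (Set.range (realPoint B)))
    (hi : realPoint B i ∈ intrinsicInterior ℝ F) (hj : realPoint B j ∈ intrinsicInterior ℝ F) :
    realPoint B i = realPoint B j := by
  have := Fintype.ofFinite m
  by_cases hij : i = j
  · rw [hij]
  obtain ⟨l, hl_zero, hl_ne⟩ := h.exists_vecMul_eq_zero hij
  refine eq_of_mem_intrinsicInterior_of_apply_eq_zero hF hi hj (realFunctional l) ?_ ?_
  · exact fun k hki hkj => by simp [realFunctional_realPoint, hl_zero k hki hkj]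
  · simpa [realFunctional_realPoint] using hl_ne

theorem stmt10_general [Fintype m] [Fintype n] {B : Matrix m n K}
    (hdist : Function.Injective B.col) (hcodim : B.rank + 2 ≤ Fintype.card n)
    (hsd : ∀ i, IsParallelFaceComplement B {j | Coparallel B i j}) :
    (∀ i, realPoint B i ∉ intrinsicInterior ℝ (convexHull ℝ (Set.range (realPoint B)))) ∧
    ∀ F ⊆ convexHull ℝ (Set.range (realPoint B)), ∀ i j,
      realPoint B i ∈ intrinsicInterior ℝ F → realPoint B j ∈ intrinsicInterior ℝ F → i = j := by
  refine ⟨fun i hi => ?_, fun F hF i j hi hj => ?_⟩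
  · obtain ⟨j, hij⟩ := exists_not_coparallel hcodim i
    exact hij (coparallel_of_mem_intrinsicInterior subset_rfl (hsd i) hi
      (subset_convexHull ℝ _ (Set.mem_range_self j)))
  · have hij : Coparallel B i j :=
      coparallel_of_mem_intrinsicInterior hF (hsd i) hi (intrinsicInterior_subset hj)
    exact realPoint_injective hdist (hij.realPoint_eq hF hi hj)

end Configuration

/-- a non pyramidal regular configuration with pairwise distinct points, of
codimension `> 1`, satisfying the self-duality criterion, has no point in the relative
interior of its convex hull, and every proper exposed face of the convex hull contains at
most one point of the configuration in its relative interior. -/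
theorem stmt10 (d n : ℕ) (hd : 0 < d) (A : Matrix (Fin d) (Fin n) ℤ)
    (hreg : ∀ i : Fin n, A ⟨0, hd⟩ i = 1)
    (hrank : (A.map (Int.cast : ℤ → ℚ)).rank = d)
    (hnp : ¬ ∃ (i₀ : Fin n) (l : Fin d → ℚ),
        (∀ i : Fin n, i ≠ i₀ → ∑ r, l r * (A r i : ℚ) = 0) ∧
        ∑ r, l r * (A r i₀ : ℚ) = 1)
    (hdist : ∀ i j : Fin n, (∀ r : Fin d, A r i = A r j) → i = j)
    (hn : d + 2 ≤ n)
    (hsd : ∀ i : Fin n, ∃ l : Fin d → ℚ,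
      (∀ j : Fin n,
        (∀ v : Fin n → ℚ, (A.map (Int.cast : ℤ → ℚ)).mulVec v = 0 → (v i ≠ 0 ↔ v j ≠ 0)) →
          ∑ r, l r * (A r j : ℚ) = 1) ∧
      (∀ j : Fin n,
        ¬ (∀ v : Fin n → ℚ, (A.map (Int.cast : ℤ → ℚ)).mulVec v = 0 → (v i ≠ 0 ↔ v j ≠ 0)) →
          ∑ r, l r * (A r j : ℚ) = 0)) :
    (∀ i : Fin n, (fun r => (A r i : ℝ)) ∉
        intrinsicInterior ℝ (convexHull ℝ (Set.range fun i : Fin n => fun r => (A r i : ℝ)))) ∧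
    ∀ F : Set (Fin d → ℝ),
      IsExposed ℝ (convexHull ℝ (Set.range fun i : Fin n => fun r => (A r i : ℝ))) F →
      F ≠ convexHull ℝ (Set.range fun i : Fin n => fun r => (A r i : ℝ)) →
      ∀ i j : Fin n, (fun r => (A r i : ℝ)) ∈ intrinsicInterior ℝ F →
        (fun r => (A r j : ℝ)) ∈ intrinsicInterior ℝ F → i = j := by
  let B : Matrix (Fin d) (Fin n) ℚ := A.map Int.cast
  have hpoint : realPoint B = fun i r => (A r i : ℝ) := by
    ext i r
    simp [realPoint, B]
  have hcol : Function.Injective B.col := fun i j h =>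
    hdist i j fun r => Int.cast_injective (congrFun h r)
  have hcodim : B.rank + 2 ≤ Fintype.card (Fin n) := by rwa [hrank, Fintype.card_fin]
  obtain ⟨hinterior, hface⟩ := stmt10_general hcol hcodim hsd
  rw [hpoint] at hinterior hface
  exact ⟨hinterior, fun F hF _ => hface F hF.subset⟩
end
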